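/- arXiv:2306.05154 — 2 statements merged into one kernel-verified Lean document; each statement's English description precedes it below -/
import Mathlib

section
/- Let f₁, …, f_k be signomials on ℝⁿ_{>0} and set S(f₁, …, f_k) = ⋂_{i=1}^{k} f_i^{-1}(ℝ_{<0}). If the set ⋂_{i=1}^{k} N_{f_i}^- is regular, i.e. it equals the closure of its interior, then Trop(S(f₁, …, f_k)) = ⋂_{i=1}^{k} N_{f_i}^-. -/
/-!
Substituting `x = t ^ w` turns a signomial into a sum of real powers of `t` whose sign, as
`t → ∞`, is governed by the exponents `μ` maximising `w · μ`. If all of these have positive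
coefficients then `f > 0` along every sequence with `Log_t x → w`; hence `Trop(S) ⊆ ⋂ N_{fᵢ}^-`.
Conversely, if `w · -` separates the exponents, the maximiser is unique and its sign decides, so
generic points of `⋂ N_{fᵢ}^-` lie in `Trop(S)`. Generic points are dense in the interior, and
`Trop(S)` is closed, which gives `closure (interior (⋂ N_{fᵢ}^-)) ⊆ Trop(S)`.
-/

/-- A signomial on the positive orthant `ℝⁿ_{>0}`: a function
`x ↦ ∑_{μ ∈ supp} coeff μ * x ^ μ` with finite support and nonzero coefficients. -/
structure Signomial (n : ℕ) where
  supp : Finset (Fin n → ℝ)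
  coeff : (Fin n → ℝ) → ℝ
  coeff_ne_zero : ∀ μ ∈ supp, coeff μ ≠ 0
  coeff_eq_zero : ∀ μ ∉ supp, coeff μ = 0

namespace Signomial

variable {n : ℕ}

/-- The monomial `x^μ = ∏ i, x i ^ μ i` (real exponents). -/
noncomputable def mono (x μ : Fin n → ℝ) : ℝ := ∏ i, x i ^ μ i

/-- Evaluation of a signomial. -/
noncomputable def eval (f : Signomial n) (x : Fin n → ℝ) : ℝ :=
  ∑ μ ∈ f.supp, f.coeff μ * mono x μ

open Classical in
/-- Evaluation of the restriction `f_{|S}` of `f` to a set `S ⊆ ℝⁿ`. -/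
noncomputable def evalOn (f : Signomial n) (S : Set (Fin n → ℝ)) (x : Fin n → ℝ) : ℝ :=
  ∑ μ ∈ f.supp, if μ ∈ S then f.coeff μ * mono x μ else 0

/-- The Newton polytope `N(f) = conv(σ(f))`. -/
def newton (f : Signomial n) : Set (Fin n → ℝ) :=
  convexHull ℝ (f.supp : Set (Fin n → ℝ))

/-- Euclidean scalar product on `Fin n → ℝ`. -/
noncomputable def dot (v μ : Fin n → ℝ) : ℝ := ∑ i, v i * μ i

/-- The face `N(f)_v` of the Newton polytope cut out by `v`. -/
def faceAt (f : Signomial n) (v : Fin n → ℝ) : Set (Fin n → ℝ) :=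
  {μ ∈ f.newton | ∀ ν ∈ f.newton, dot v ν ≤ dot v μ}

/-- `F` is a (nonempty, exposed) face of the Newton polytope of `f`. -/
def IsFace (f : Signomial n) (F : Set (Fin n → ℝ)) : Prop :=
  F.Nonempty ∧ ∃ v, F = f.faceAt v

/-- The (outer) normal cone of a face `F` of `N(f)`. -/
def normalCone (f : Signomial n) (F : Set (Fin n → ℝ)) : Set (Fin n → ℝ) :=
  {v | F ⊆ f.faceAt v}

/-- The negative normal cone `N_f^- = {v | N(f)_v ∩ σ₋(f) ≠ ∅}`. -/
def negCone (f : Signomial n) : Set (Fin n → ℝ) :=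
  {v | ∃ μ ∈ f.supp, f.coeff μ < 0 ∧ μ ∈ f.faceAt v}

/-- The positive orthant `ℝⁿ_{>0}`. -/
def posOrth (n : ℕ) : Set (Fin n → ℝ) := {x | ∀ i, 0 < x i}

/-- `S(f) = f⁻¹(ℝ_{<0})` (inside the positive orthant). -/
def negSet₁ (f : Signomial n) : Set (Fin n → ℝ) :=
  {x ∈ posOrth n | f.eval x < 0}

/-- `S(f₁, …, f_k) = ⋂ᵢ fᵢ⁻¹(ℝ_{<0})` (inside the positive orthant). -/
def negSet {k : ℕ} (f : Fin k → Signomial n) : Set (Fin n → ℝ) :=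
  {x ∈ posOrth n | ∀ i, (f i).eval x < 0}

/-- The actual negative normal cone `Σ(f)` of a single signomial. -/
def actualNegCone₁ (f : Signomial n) : Set (Fin n → ℝ) :=
  {v | ∃ x ∈ posOrth n, f.evalOn (f.faceAt v) x < 0}

/-- The actual negative normal cone `Σ(f₁, …, f_k)`. -/
def actualNegCone {k : ℕ} (f : Fin k → Signomial n) : Set (Fin n → ℝ) :=
  {v | ∃ x ∈ posOrth n, ∀ i, (f i).evalOn ((f i).faceAt v) x < 0}

/-- The real tropicalization (logarithmic limit set) of `S ⊆ ℝⁿ_{>0}`: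
`w ∈ Trop(S)` iff there are sequences `x(m) ∈ S`, `t(m) ∈ (1,∞)` with `t(m) → ∞` and
`Log_{t(m)}(x(m)) → w`. -/
def trop (S : Set (Fin n → ℝ)) : Set (Fin n → ℝ) :=
  {w | ∃ (x : ℕ → Fin n → ℝ) (t : ℕ → ℝ),
    (∀ m, x m ∈ S) ∧ (∀ m, 1 < t m) ∧
    Filter.Tendsto t Filter.atTop Filter.atTop ∧
    Filter.Tendsto (fun m i => Real.log (x m i) / Real.log (t m))
      Filter.atTop (nhds w)}

open Classical in
/-- The support of the restriction `f_{|F}`, i.e. `σ(f) ∩ F`. -/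
noncomputable def restSupp (f : Signomial n) (F : Set (Fin n → ℝ)) : Finset (Fin n → ℝ) :=
  f.supp.filter (fun μ => μ ∈ F)

/-- Evaluation of the signomial with coefficient vector `c ∈ ℝ^A`. -/
noncomputable def evalVec (A : Finset (Fin n → ℝ)) (c : A → ℝ) (x : Fin n → ℝ) : ℝ :=
  ∑ μ : A, c μ * mono x (μ : Fin n → ℝ)

/-- The nonnegativity cone `P⁺_A ⊆ ℝ^A`. -/
def nonnegConeSet (A : Finset (Fin n → ℝ)) : Set (A → ℝ) :=
  {c | ∀ x ∈ posOrth n, 0 ≤ evalVec A c x}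

/-- The coefficient vector of `f` viewed in `ℝ^A`. -/
def coeffVec (f : Signomial n) (A : Finset (Fin n → ℝ)) : A → ℝ :=
  fun μ => f.coeff μ

/-- The non-boundary condition (NB): for every face `F` of `N(f)`, if `f_{|F}` is
nonnegative on the positive orthant then it lies in the interior of the nonnegativity
cone `P⁺_{σ(f) ∩ F}`. -/
def NBcond (f : Signomial n) : Prop :=
  ∀ F : Set (Fin n → ℝ), f.IsFace F →
    coeffVec f (f.restSupp F) ∈ nonnegConeSet (f.restSupp F) →
    coeffVec f (f.restSupp F) ∈ interior (nonnegConeSet (f.restSupp F))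

end Signomial

open Filter Topology

section DominantTerm

variable {α ι : Type*} {l : Filter α} {t : α → ℝ}

theorem tendsto_rpow_zero_of_tendsto_neg (ht : Tendsto t l atTop) {e : α → ℝ} {E : ℝ}
    (he : Tendsto e l (𝓝 E)) (hE : E < 0) : Tendsto (fun a => t a ^ e a) l (𝓝 0) := by
  have hlog : Tendsto (fun a => Real.log (t a) * e a) l atBot :=
    (Real.tendsto_log_atTop.comp ht).atTop_mul_neg hE he
  refine (Real.tendsto_exp_atBot.comp hlog).congr' ?_
  filter_upwards [ht.eventually_gt_atTop 0] with a ha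
  exact (Real.rpow_def_of_pos ha (e a)).symm

theorem eventually_sum_mul_rpow_pos (ht : Tendsto t l atTop) {s : Finset ι} {c : ι → ℝ}
    {e : ι → α → ℝ} {E : ι → ℝ} (he : ∀ i ∈ s, Tendsto (e i) l (𝓝 (E i))) {i₀ : ι}
    (hi₀ : i₀ ∈ s) (hc₀ : 0 < c i₀) (hlt : ∀ i ∈ s, c i < 0 → E i < E i₀) :
    ∀ᶠ a in l, 0 < ∑ i ∈ s, c i * t a ^ e i a := by
  have hneg : Tendsto (fun a => ∑ i ∈ s with c i < 0, c i * t a ^ (e i a - e i₀ a)) l (𝓝 0) := by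
    have hterm : ∀ i ∈ s.filter (c · < 0),
        Tendsto (fun a => c i * t a ^ (e i a - e i₀ a)) l (𝓝 0) := by
      intro i hi
      obtain ⟨his, hci⟩ := Finset.mem_filter.1 hi
      simpa only [mul_zero] using (tendsto_rpow_zero_of_tendsto_neg ht
        ((he i his).sub (he i₀ hi₀)) (sub_neg.2 (hlt i his hci))).const_mul (c i)
    simpa only [Finset.sum_const_zero] using tendsto_finsetSum _ hterm
  filter_upwards [ht.eventually_gt_atTop 0, hneg.eventually_const_lt (neg_lt_zero.2 hc₀)]
    with a hta hlower
  have hnonneg : c i₀ ≤ ∑ i ∈ s with ¬ c i < 0, c i * t a ^ (e i a - e i₀ a) := by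
    have hle := Finset.single_le_sum (f := fun i => c i * t a ^ (e i a - e i₀ a))
      (fun i hi => mul_nonneg (not_lt.1 (Finset.mem_filter.1 hi).2) (Real.rpow_nonneg hta.le _))
      (Finset.mem_filter.2 ⟨hi₀, hc₀.not_gt⟩)
    simpa only [sub_self, Real.rpow_zero, mul_one] using hle
  have hfactor : ∑ i ∈ s, c i * t a ^ e i a =
      t a ^ e i₀ a * ∑ i ∈ s, c i * t a ^ (e i a - e i₀ a) := by
    rw [Finset.mul_sum]
    refine Finset.sum_congr rfl fun i _ => ?_
    rw [mul_left_comm, ← Real.rpow_add hta, add_sub_cancel]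
  rw [hfactor, ← Finset.sum_filter_add_sum_filter_not s (c · < 0)]
  exact mul_pos (Real.rpow_pos_of_pos hta _) (by linarith)

end DominantTerm

section GenericDirection

variable {ι : Type*} [Fintype ι]

theorem isOpen_setOf_dotProduct_ne_zero (d : ι → ℝ) : IsOpen {v : ι → ℝ | v ⬝ᵥ d ≠ 0} :=
  isOpen_compl_singleton.preimage (continuous_id.dotProduct continuous_const)

theorem dense_setOf_dotProduct_ne_zero {d : ι → ℝ} (hd : d ≠ 0) :
    Dense {v : ι → ℝ | v ⬝ᵥ d ≠ 0} := by
  let φ : StrongDual ℝ (ι → ℝ) :=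
    ((dotProductBilin ℝ ℝ).flip d : (ι → ℝ) →ₗ[ℝ] ℝ).toContinuousLinearMap
  have hφ : φ ≠ 0 := fun h => hd (dotProduct_self_eq_zero.1 (congrArg (· d) h))
  exact (dense_compl_singleton (0 : ℝ)).preimage (φ.isOpenMap_of_ne_zero hφ)

theorem dense_setOf_injOn_dotProduct {s : Set (ι → ℝ)} (hs : s.Countable) :
    Dense {v : ι → ℝ | s.InjOn (v ⬝ᵥ ·)} := by
  have hdense : Dense (⋂ p ∈ s.offDiag, {v : ι → ℝ | v ⬝ᵥ (p.1 - p.2) ≠ 0}) :=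
    dense_biInter_of_isOpen (fun p _ => isOpen_setOf_dotProduct_ne_zero _)
      ((hs.prod hs).mono s.offDiag_subset_prod)
      fun p hp => dense_setOf_dotProduct_ne_zero (sub_ne_zero.2 hp.2.2)
  refine hdense.mono fun v hv μ hμ ν hν heq => ?_
  by_contra hne
  exact Set.mem_iInter₂.1 hv (μ, ν) ⟨hμ, hν, hne⟩ ((dotProduct_sub v μ ν).trans (sub_eq_zero.2 heq))

end GenericDirection

namespace Signomial

variable {n k : ℕ}

theorem dot_eq_dotProduct (v μ : Fin n → ℝ) : dot v μ = v ⬝ᵥ μ := rfl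

theorem continuous_dot_left (μ : Fin n → ℝ) : Continuous (dot · μ) := by
  simp only [dot_eq_dotProduct]
  fun_prop

theorem mem_negCone_iff {f : Signomial n} {v : Fin n → ℝ} :
    v ∈ f.negCone ↔ ∃ μ ∈ f.supp, f.coeff μ < 0 ∧ ∀ ν ∈ f.supp, dot v ν ≤ dot v μ := by
  refine exists_congr fun μ => and_congr_right fun hμ => and_congr_right fun _ => ?_
  have hconvex : Convex ℝ {ν | dot v ν ≤ dot v μ} :=
    convex_halfSpace_le (dotProductBilin ℝ ℝ v).isLinear _
  exact ⟨fun h ν hν => h.2 ν (subset_convexHull ℝ _ hν),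
    fun h => ⟨subset_convexHull ℝ _ hμ, fun ν hν => convexHull_min h hconvex hν⟩⟩

/-- The logarithm map `Log_t x = (ln x₁ / ln t, …, ln xₙ / ln t)` of the paper, written with
`Real.logb`, which unfolds to these quotients. -/
noncomputable def logVec (t : ℝ) (x : Fin n → ℝ) : Fin n → ℝ := fun i => Real.logb t (x i)

theorem logVec_rpow {t : ℝ} (ht : 1 < t) (v : Fin n → ℝ) : logVec t (fun i => t ^ v i) = v :=
  funext fun _ => Real.logb_rpow (by positivity) ht.ne'

theorem tendsto_logVec_rpow (v : Fin n → ℝ) :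
    Tendsto (fun t : ℝ => logVec t fun i => t ^ v i) atTop (𝓝 v) :=
  tendsto_const_nhds.congr' <|
    (eventually_gt_atTop 1).mono fun _ ht => (logVec_rpow ht v).symm

theorem mono_eq_rpow_dot_logVec {t : ℝ} (ht : 1 < t) {x : Fin n → ℝ} (hx : x ∈ posOrth n)
    (μ : Fin n → ℝ) : mono x μ = t ^ dot (logVec t x) μ := by
  have ht₀ : 0 < t := by positivity
  rw [dot, Real.rpow_sum_of_pos ht₀]
  refine Finset.prod_congr rfl fun i _ => ?_
  rw [Real.rpow_mul ht₀.le, logVec, Real.rpow_logb ht₀ ht.ne' (hx i)]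

section Asymptotics

variable {α : Type*} {l : Filter α} {t : α → ℝ} {x : α → Fin n → ℝ} {w : Fin n → ℝ}

theorem eventually_sum_mul_mono_pos (ht : Tendsto t l atTop) (hx : ∀ᶠ a in l, x a ∈ posOrth n)
    (hw : Tendsto (fun a => logVec (t a) (x a)) l (𝓝 w)) {s : Finset (Fin n → ℝ)}
    {c : (Fin n → ℝ) → ℝ} {μ₀ : Fin n → ℝ} (hμ₀ : μ₀ ∈ s) (hc₀ : 0 < c μ₀)
    (hlt : ∀ μ ∈ s, c μ < 0 → dot w μ < dot w μ₀) :
    ∀ᶠ a in l, 0 < ∑ μ ∈ s, c μ * mono (x a) μ := by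
  have he (μ) (_ : μ ∈ s) : Tendsto (fun a => dot (logVec (t a) (x a)) μ) l (𝓝 (dot w μ)) :=
    ((continuous_dot_left μ).tendsto w).comp hw
  filter_upwards [ht.eventually_gt_atTop 1, hx, eventually_sum_mul_rpow_pos ht he hμ₀ hc₀ hlt]
    with a hta hxa hpos
  simpa only [mono_eq_rpow_dot_logVec hta hxa] using hpos

theorem mem_negCone_of_frequently_eval_neg {f : Signomial n} (ht : Tendsto t l atTop)
    (hx : ∀ᶠ a in l, x a ∈ posOrth n) (hw : Tendsto (fun a => logVec (t a) (x a)) l (𝓝 w))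
    (hneg : ∃ᶠ a in l, f.eval (x a) < 0) : w ∈ f.negCone := by
  have hsupp : f.supp.Nonempty := by
    obtain ⟨a, ha⟩ := hneg.exists
    exact Finset.nonempty_of_sum_ne_zero ha.ne
  obtain ⟨μ₀, hμ₀, hmax⟩ := f.supp.exists_max_image (dot w) hsupp
  by_contra hmem
  have hlt : ∀ μ ∈ f.supp, f.coeff μ < 0 → dot w μ < dot w μ₀ := by
    intro μ hμ hcμ
    by_contra! hle
    exact hmem (mem_negCone_iff.2 ⟨μ, hμ, hcμ, fun ν hν => (hmax ν hν).trans hle⟩)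
  have hc₀ : 0 < f.coeff μ₀ :=
    (f.coeff_ne_zero μ₀ hμ₀).lt_or_gt.resolve_left fun h => (hlt μ₀ hμ₀ h).false
  exact hneg ((eventually_sum_mul_mono_pos ht hx hw hμ₀ hc₀ hlt).mono fun _ h => h.not_gt)

theorem eventually_eval_neg_of_injOn {f : Signomial n} (ht : Tendsto t l atTop)
    (hx : ∀ᶠ a in l, x a ∈ posOrth n) (hw : Tendsto (fun a => logVec (t a) (x a)) l (𝓝 w))
    (hmem : w ∈ f.negCone) (hinj : Set.InjOn (dot w) f.supp) :
    ∀ᶠ a in l, f.eval (x a) < 0 := by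
  obtain ⟨μ₀, hμ₀, hc₀, hmax⟩ := mem_negCone_iff.1 hmem
  have hlt : ∀ μ ∈ f.supp, -f.coeff μ < 0 → dot w μ < dot w μ₀ := fun μ hμ hcμ =>
    (hmax μ hμ).lt_of_ne fun heq => by linarith [congrArg f.coeff (hinj hμ hμ₀ heq)]
  filter_upwards [eventually_sum_mul_mono_pos ht hx hw hμ₀ (neg_pos.2 hc₀) hlt] with a ha
  simpa only [eval, neg_mul, Finset.sum_neg_distrib, neg_pos] using ha

end Asymptotics

theorem mem_trop_iff_mapClusterPt {S : Set (Fin n → ℝ)} {w : Fin n → ℝ} :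
    w ∈ trop S ↔ MapClusterPt w (atTop ×ˢ 𝓟 S) fun p : ℝ × (Fin n → ℝ) => logVec p.1 p.2 := by
  constructor
  · rintro ⟨x, t, hxS, -, ht, hw⟩
    have hpair : Tendsto (fun m => (t m, x m)) atTop (atTop ×ˢ 𝓟 S) :=
      ht.prodMk (tendsto_principal.2 (.of_forall hxS))
    exact .of_comp hpair (Tendsto.mapClusterPt hw)
  · intro h
    rw [MapClusterPt, ClusterPt, ← Filter.push_pull', map_neBot_iff] at h
    have hev : ∀ᶠ p in comap (fun p : ℝ × (Fin n → ℝ) => logVec p.1 p.2) (𝓝 w) ⊓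
        (atTop ×ˢ 𝓟 S), 1 < p.1 ∧ p.2 ∈ S :=
      ((eventually_gt_atTop 1).prod_mk (eventually_mem_set.2 (mem_principal_self S))).filter_mono
        inf_le_right
    obtain ⟨p, hp, hpS⟩ := exists_seq_forall_of_frequently hev.frequently
    obtain ⟨hcomap, hprod⟩ := tendsto_inf.1 hp
    exact ⟨fun m => (p m).2, fun m => (p m).1, fun m => (hpS m).2, fun m => (hpS m).1,
      tendsto_fst.comp hprod, tendsto_comap_iff.1 hcomap⟩

theorem isClosed_trop (S : Set (Fin n → ℝ)) : IsClosed (trop S) := by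
  have h : trop S = {w | MapClusterPt w (atTop ×ˢ 𝓟 S)
      fun p : ℝ × (Fin n → ℝ) => logVec p.1 p.2} := Set.ext fun _ => mem_trop_iff_mapClusterPt
  rw [h]
  exact isClosed_setOfPred_clusterPt

theorem mem_trop_of_eventually_rpow_mem {S : Set (Fin n → ℝ)} {v : Fin n → ℝ}
    (h : ∀ᶠ t : ℝ in atTop, (fun i => t ^ v i) ∈ S) : v ∈ trop S :=
  mem_trop_iff_mapClusterPt.2 (.of_comp (tendsto_id.prodMk (tendsto_principal.2 h))
    (tendsto_logVec_rpow v).mapClusterPt)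

theorem mem_trop_negSet_of_injOn {f : Fin k → Signomial n} {v : Fin n → ℝ}
    (hv : v ∈ ⋂ i, (f i).negCone) (hinj : ∀ i, Set.InjOn (dot v) (f i).supp) :
    v ∈ trop (negSet f) := by
  have hpos : ∀ᶠ t : ℝ in atTop, (fun i => t ^ v i) ∈ posOrth n :=
    (eventually_gt_atTop 0).mono fun t ht i => Real.rpow_pos_of_pos ht (v i)
  have hneg (i) : ∀ᶠ t : ℝ in atTop, (f i).eval (fun j => t ^ v j) < 0 :=
    eventually_eval_neg_of_injOn tendsto_id hpos (tendsto_logVec_rpow v)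
      (Set.mem_iInter.1 hv i) (hinj i)
  exact mem_trop_of_eventually_rpow_mem (hpos.and (eventually_all.2 hneg))

theorem dense_setOf_forall_injOn_dot {ι : Type*} [Countable ι] (f : ι → Signomial n) :
    Dense {v : Fin n → ℝ | ∀ i, Set.InjOn (dot v) (f i).supp} :=
  (dense_setOf_injOn_dotProduct
    (Set.countable_iUnion fun i => (f i).supp.countable_toSet)).mono
      fun _ hv i => hv.mono (Set.subset_iUnion (fun i => ((f i).supp : Set (Fin n → ℝ))) i)

theorem trop_negSet_subset (f : Fin k → Signomial n) :
    trop (negSet f) ⊆ ⋂ i, (f i).negCone := by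
  rintro w ⟨x, t, hx, -, ht, hw⟩
  exact Set.mem_iInter.2 fun i => mem_negCone_of_frequently_eval_neg ht
    (.of_forall fun m => (hx m).1) hw (.of_forall fun m => (hx m).2 i)

theorem closure_interior_iInter_negCone_subset_trop (f : Fin k → Signomial n) :
    closure (interior (⋂ i, (f i).negCone)) ⊆ trop (negSet f) := by
  refine closure_minimal ?_ (isClosed_trop _)
  refine ((dense_setOf_forall_injOn_dot f).open_subset_closure_inter isOpen_interior).trans ?_
  exact closure_minimal (fun v hv => mem_trop_negSet_of_injOn (interior_subset hv.1) hv.2)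
    (isClosed_trop _)

end Signomial

open Signomial in
/-- If `⋂ᵢ N_{fᵢ}^-` is regular (equals the closure of its interior),
then `Trop(S(f₁, …, f_k)) = ⋂ᵢ N_{fᵢ}^-`. -/
theorem trop_eq_negCones_of_regular {n k : ℕ} (f : Fin k → Signomial n)
    (hreg : (⋂ i, negCone (f i)) = closure (interior (⋂ i, negCone (f i)))) :
    trop (negSet f) = ⋂ i, negCone (f i) := by
  refine (trop_negSet_subset f).antisymm ?_
  rw [hreg]
  exact closure_interior_iInter_negCone_subset_trop f
end

section
/- Let f(x₁, x₂, x₃) = x₂² − 2x₂ + 1 − 2x₁x₂x₃ + x₁x₂x₃² + x₁²x₂, a signomial on ℝ³_{>0}. Then the actual negative normal cone of f is Σ(f) = {0}; that is, f itself attains a negative value on ℝ³_{>0} (e.g. f(1/2, 1, 1/2) = −1/8 < 0), while for every v ∈ ℝ³ with v ≠ 0, the restriction f_{|N(f)_v} is nonnegative on ℝ³_{>0}. -/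
/-!
A linear functional which attains its maximum over the Newton polytope at a midpoint of two points
attains it at both of them. The point `(1, 1, 1)` is reached from the vertices `(0, 2, 0)`,
`(0, 0, 0)`, `(2, 1, 0)`, `(1, 1, 2)` by taking midpoints three times in succession, and these
vertices are affinely independent, so `(1, 1, 1)` lies on no proper face. The other negative
exponent `(0, 1, 0)` is the midpoint of `(0, 2, 0)` and `(0, 0, 0)`: a face containing it contains
all three, and their terms add up to `(x₂ - 1)²`. In general, since the square of
`x^((a + b) / 2)` is `x^a * x^b`, the terms at `a`, `(a + b) / 2` and `b` make up a binary
quadratic form, which is nonnegative as soon as its discriminant is nonpositive and its leading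
coefficient positive.
-/

namespace Signomial

variable {n : ℕ} {f : Signomial n} {v x a b μ ν : Fin n → ℝ}

lemma subset_newton (f : Signomial n) : (f.supp : Set (Fin n → ℝ)) ⊆ f.newton :=
  subset_convexHull ℝ _

lemma faceAt_zero (f : Signomial n) : f.faceAt 0 = f.newton := by
  simp [faceAt, dot]

lemma dot_eq_of_mem_faceAt (hμ : μ ∈ f.faceAt v) (hν : ν ∈ f.faceAt v) : dot v μ = dot v ν :=
  le_antisymm (hν.2 μ hμ.1) (hμ.2 ν hν.1)

lemma mem_faceAt_of_dot_le (hμ : μ ∈ f.faceAt v) (hν : ν ∈ f.newton) (h : dot v μ ≤ dot v ν) :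
    ν ∈ f.faceAt v :=
  ⟨hν, fun ρ hρ => (hμ.2 ρ hρ).trans h⟩

lemma dot_add (v a b : Fin n → ℝ) : dot v (a + b) = dot v a + dot v b :=
  dotProduct_add v a b

lemma mem_faceAt_of_midpoint_mem_faceAt (ha : a ∈ f.newton) (hb : b ∈ f.newton)
    (h : midpoint ℝ a b ∈ f.faceAt v) : a ∈ f.faceAt v ∧ b ∈ f.faceAt v := by
  have hsum : dot v a + dot v b = dot v (midpoint ℝ a b) + dot v (midpoint ℝ a b) := by
    rw [← dot_add, ← dot_add, midpoint_add_self]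
  have hdot_a := h.2 a ha
  have hdot_b := h.2 b hb
  exact ⟨mem_faceAt_of_dot_le h ha (by linarith), mem_faceAt_of_dot_le h hb (by linarith)⟩

lemma mono_pos (hx : x ∈ posOrth n) (μ : Fin n → ℝ) : 0 < mono x μ :=
  Finset.prod_pos fun i _ => Real.rpow_pos_of_pos (hx i) (μ i)

lemma mono_add (hx : x ∈ posOrth n) (μ ν : Fin n → ℝ) :
    mono x (μ + ν) = mono x μ * mono x ν := by
  simp only [mono, Pi.add_apply, Real.rpow_add (hx _), Finset.prod_mul_distrib]

lemma mono_midpoint_sq (hx : x ∈ posOrth n) (a b : Fin n → ℝ) :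
    mono x (midpoint ℝ a b) ^ 2 = mono x a * mono x b := by
  rw [sq, ← mono_add hx, midpoint_add_self, mono_add hx]

lemma mem_restSupp {S : Set (Fin n → ℝ)} : μ ∈ f.restSupp S ↔ μ ∈ f.supp ∧ μ ∈ S := by
  simp only [restSupp, Finset.mem_filter]

lemma evalOn_eq_sum_restSupp (f : Signomial n) (S : Set (Fin n → ℝ)) (x : Fin n → ℝ) :
    f.evalOn S x = ∑ μ ∈ f.restSupp S, f.coeff μ * mono x μ := by
  simp only [evalOn, restSupp, Finset.sum_filter]

lemma evalOn_newton (f : Signomial n) (x : Fin n → ℝ) : f.evalOn f.newton x = f.eval x :=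
  Finset.sum_congr rfl fun _ hμ => if_pos (f.subset_newton hμ)

lemma sum_le_evalOn {S : Set (Fin n → ℝ)} {T : Finset (Fin n → ℝ)} (hx : x ∈ posOrth n)
    (hT : T ⊆ f.restSupp S) (hcoeff : ∀ μ ∈ f.restSupp S, μ ∉ T → 0 ≤ f.coeff μ) :
    ∑ μ ∈ T, f.coeff μ * mono x μ ≤ f.evalOn S x := by
  rw [evalOn_eq_sum_restSupp]
  exact Finset.sum_le_sum_of_subset_of_nonneg hT fun μ hμ hμT =>
    mul_nonneg (hcoeff μ hμ hμT) (mono_pos hx μ).le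

lemma zero_mem_actualNegCone₁_iff : 0 ∈ f.actualNegCone₁ ↔ f.negSet₁.Nonempty := by
  simp only [actualNegCone₁, negSet₁, Set.Nonempty, Set.mem_ofPred_eq, faceAt_zero, evalOn_newton]

lemma actualNegCone₁_eq_singleton_zero_iff :
    f.actualNegCone₁ = {0} ↔
      f.negSet₁.Nonempty ∧ ∀ v ≠ 0, ∀ x ∈ posOrth n, 0 ≤ f.evalOn (f.faceAt v) x := by
  rw [Set.eq_singleton_iff_unique_mem, zero_mem_actualNegCone₁_iff]
  refine and_congr_right fun _ => forall_congr' fun v => ?_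
  rw [← not_imp_not]
  simp only [actualNegCone₁, Set.mem_ofPred_eq, not_exists, not_and, not_lt, ne_eq]

lemma midpoint_trinomial_nonneg {p q r : ℝ} (hp : 0 < p) (hdisc : q ^ 2 ≤ 4 * p * r)
    (hx : x ∈ posOrth n) (a b : Fin n → ℝ) :
    0 ≤ p * mono x a + q * mono x (midpoint ℝ a b) + r * mono x b := by
  have hM := mono_midpoint_sq hx a b
  set A := mono x a
  set B := mono x b
  set M := mono x (midpoint ℝ a b)
  have hscale : 0 < 4 * p * A := mul_pos (by positivity) (mono_pos hx a)
  have hsquare : 4 * p * A * (p * A + q * M + r * B) =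
      (2 * p * A + q * M) ^ 2 + (4 * p * r - q ^ 2) * M ^ 2 := by
    linear_combination -4 * p * r * hM
  refine nonneg_of_mul_nonneg_right ?_ hscale
  rw [hsquare]
  exact add_nonneg (sq_nonneg _) (mul_nonneg (sub_nonneg.2 hdisc) (sq_nonneg _))

lemma evalOn_faceAt_nonneg_of_midpoint (hab : a ≠ b) (ha : a ∈ f.supp) (hb : b ∈ f.supp)
    (hdisc : f.coeff (midpoint ℝ a b) ^ 2 ≤ 4 * f.coeff a * f.coeff b)
    (hcoeff : ∀ μ ∈ f.restSupp (f.faceAt v), μ ≠ midpoint ℝ a b → 0 ≤ f.coeff μ)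
    (hx : x ∈ posOrth n) : 0 ≤ f.evalOn (f.faceAt v) x := by
  by_cases hm : midpoint ℝ a b ∈ f.restSupp (f.faceAt v)
  · obtain ⟨ha_face, hb_face⟩ := mem_faceAt_of_midpoint_mem_faceAt (f.subset_newton ha)
      (f.subset_newton hb) (mem_restSupp.1 hm).2
    have ha_rest : a ∈ f.restSupp (f.faceAt v) := mem_restSupp.2 ⟨ha, ha_face⟩
    have hb_rest : b ∈ f.restSupp (f.faceAt v) := mem_restSupp.2 ⟨hb, hb_face⟩
    have ha_ne : a ≠ midpoint ℝ a b := by simpa [eq_comm] using hab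
    have hb_ne : midpoint ℝ a b ≠ b := by simpa using hab
    have ha_pos : 0 < f.coeff a :=
      (hcoeff a ha_rest ha_ne).lt_of_ne' (f.coeff_ne_zero a ha)
    calc 0 ≤ f.coeff a * mono x a + f.coeff (midpoint ℝ a b) * mono x (midpoint ℝ a b) +
          f.coeff b * mono x b := midpoint_trinomial_nonneg ha_pos hdisc hx a b
      _ = ∑ μ ∈ {a, midpoint ℝ a b, b}, f.coeff μ * mono x μ := by
        rw [Finset.sum_insert (by simp [ha_ne, hab]), Finset.sum_pair hb_ne, add_assoc]
      _ ≤ f.evalOn (f.faceAt v) x := by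
        refine sum_le_evalOn hx (by simp [Finset.insert_subset_iff, *]) fun μ hμ hμT => ?_
        exact hcoeff μ hμ fun h => hμT (by simp [h])
  · calc 0 = ∑ μ ∈ ∅, f.coeff μ * mono x μ := Finset.sum_empty.symm
      _ ≤ f.evalOn (f.faceAt v) x := sum_le_evalOn hx (Finset.empty_subset _) fun μ hμ _ =>
        hcoeff μ hμ (ne_of_mem_of_not_mem hμ hm)

lemma dot_vec_three (v : Fin 3 → ℝ) (p q r : ℝ) :
    dot v ![p, q, r] = v 0 * p + v 1 * q + v 2 * r :=
  Fin.sum_univ_three _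

lemma mono_vec_three (x y z p q r : ℝ) : mono ![x, y, z] ![p, q, r] = x ^ p * y ^ q * z ^ r :=
  Fin.prod_univ_three _

lemma midpoint_vec_three (p q r p' q' r' : ℝ) :
    midpoint ℝ ![p, q, r] ![p', q', r'] = ![(p + p') / 2, (q + q') / 2, (r + r') / 2] := by
  simp [midpoint_eq_smul_add, div_eq_inv_mul]

lemma eq_zero_of_one_one_one_mem_faceAt {f : Signomial 3} {v : Fin 3 → ℝ}
    (hvertices : {![0, 2, 0], ![0, 0, 0], ![2, 1, 0], ![1, 1, 2]} ⊆ f.newton)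
    (h : ![1, 1, 1] ∈ f.faceAt v) : v = 0 := by
  simp only [Set.insert_subset_iff, Set.singleton_subset_iff] at hvertices
  obtain ⟨h020, h000, h210, h112⟩ := hvertices
  have hmid₁ : midpoint ℝ ![0, 2, 0] ![0, 0, 0] = (![0, 1, 0] : Fin 3 → ℝ) := by
    norm_num [midpoint_vec_three]
  have hmid₂ : midpoint ℝ ![0, 1, 0] ![2, 1, 0] = (![1, 1, 0] : Fin 3 → ℝ) := by
    norm_num [midpoint_vec_three]
  have hmid₃ : midpoint ℝ ![1, 1, 0] ![1, 1, 2] = (![1, 1, 1] : Fin 3 → ℝ) := by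
    norm_num [midpoint_vec_three]
  have hconvex : Convex ℝ f.newton := convex_convexHull ℝ _
  have h010 : ![0, 1, 0] ∈ f.newton := hmid₁ ▸ hconvex.midpoint_mem h020 h000
  have h110 : ![1, 1, 0] ∈ f.newton := hmid₂ ▸ hconvex.midpoint_mem h010 h210
  obtain ⟨face110, face112⟩ := mem_faceAt_of_midpoint_mem_faceAt h110 h112 (hmid₃ ▸ h)
  obtain ⟨face010, face210⟩ := mem_faceAt_of_midpoint_mem_faceAt h010 h210 (hmid₂ ▸ face110)
  obtain ⟨face020, face000⟩ := mem_faceAt_of_midpoint_mem_faceAt h020 h000 (hmid₁ ▸ face010)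
  have hdot₁ := dot_eq_of_mem_faceAt face020 face000
  have hdot₂ := dot_eq_of_mem_faceAt face210 face000
  have hdot₃ := dot_eq_of_mem_faceAt face112 face000
  simp only [dot_vec_three] at hdot₁ hdot₂ hdot₃
  have hv₁ : v 1 = 0 := by linarith
  have hv₀ : v 0 = 0 := by linarith
  have hv₂ : v 2 = 0 := by linarith
  ext i
  fin_cases i
  exacts [hv₀, hv₁, hv₂]

end Signomial

open Signomial in
/-- For `f = x₂² − 2x₂ + 1 − 2x₁x₂x₃ + x₁x₂x₃² + x₁²x₂`, the actual
negative normal cone is `Σ(f) = {0}`: `f` attains a negative value on `ℝ³_{>0}`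
(e.g. `f(1/2, 1, 1/2) = −1/8`), while for every `v ≠ 0` the restriction `f_{|N(f)_v}`
is nonnegative on `ℝ³_{>0}`. -/
theorem actualNegCone_eq_zero_example (f : Signomial 3)
    (hsupp : f.supp =
      {![0, 2, 0], ![0, 1, 0], ![0, 0, 0], ![1, 1, 1], ![1, 1, 2], ![2, 1, 0]})
    (c1 : f.coeff ![0, 2, 0] = 1) (c2 : f.coeff ![0, 1, 0] = -2)
    (c3 : f.coeff ![0, 0, 0] = 1) (c4 : f.coeff ![1, 1, 1] = -2)
    (c5 : f.coeff ![1, 1, 2] = 1) (c6 : f.coeff ![2, 1, 0] = 1) :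
    actualNegCone₁ f = {0} ∧
    f.eval ![1/2, 1, 1/2] = -(1/8) ∧
    (∀ v : Fin 3 → ℝ, v ≠ 0 → ∀ x ∈ posOrth 3, 0 ≤ f.evalOn (f.faceAt v) x) := by
  have heval : f.eval ![1/2, 1, 1/2] = -(1/8) := by
    norm_num [eval, hsupp, c1, c2, c3, c4, c5, c6, mono_vec_three]
  have hneg : f.negSet₁.Nonempty :=
    ⟨![1/2, 1, 1/2], fun i => by fin_cases i <;> simp, by norm_num [heval]⟩
  have hmid : midpoint ℝ ![0, 2, 0] ![0, 0, 0] = (![0, 1, 0] : Fin 3 → ℝ) := by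
    norm_num [midpoint_vec_three]
  have hcoeff : ∀ μ ∈ f.supp, μ ≠ ![0, 1, 0] → μ ≠ ![1, 1, 1] → 0 ≤ f.coeff μ := by
    simp [hsupp, c1, c2, c3, c4, c5, c6]
  have hnonneg : ∀ v ≠ 0, ∀ x ∈ posOrth 3, 0 ≤ f.evalOn (f.faceAt v) x := by
    intro v hv x hx
    have hproper : ![1, 1, 1] ∉ f.faceAt v := fun h => hv <| eq_zero_of_one_one_one_mem_faceAt
      (subset_trans (by simp [hsupp, Set.insert_subset_iff]) f.subset_newton) h
    refine evalOn_faceAt_nonneg_of_midpoint (a := ![0, 2, 0]) (b := ![0, 0, 0]) (by simp)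
      (by simp [hsupp]) (by simp [hsupp]) (by norm_num [hmid, c1, c2, c3]) (fun μ hμ hne => ?_) hx
    obtain ⟨hμ_supp, hμ_face⟩ := mem_restSupp.1 hμ
    exact hcoeff μ hμ_supp (hmid ▸ hne) (ne_of_mem_of_not_mem hμ_face hproper)
  exact ⟨actualNegCone₁_eq_singleton_zero_iff.2 ⟨hneg, hnonneg⟩, heval, hnonneg⟩
end
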